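/- arXiv:1807.11837 — 2 statements merged into one kernel-verified Lean document; each statement's English description precedes it below -/
import Mathlib

section
/- (Nonexistence criterion, left-focal problem) If ∑_{s=a+2}^{b} |q(s)| < (α − 1)/(b − a − 1), then the only function u : N[a+1,b] → ℝ satisfying u(t) = ∑_{s=a+2}^{b} G_l(t, s) q(s) u(s) for every t with a+1 ≤ t ≤ b (the Green's-function form of the left-focal fractional boundary value problem ∇_a^α u(t) + q(t)u(t) = 0 for a+2 ≤ t ≤ b, with ∇_a^{α−1} u(a+1) = 0 and u(b) = 0) is the identically zero function. -/
/-- Rising factorial `rf x r = Γ(x+r)/Γ(x)`, with the convention `rf 0 r = 0`. -/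
noncomputable def rf (x r : ℝ) : ℝ := if x = 0 then 0 else Real.Gamma (x + r) / Real.Gamma x

/-- The left-focal Green's function. -/
noncomputable def Gl (a b : ℤ) (α : ℝ) (t s : ℤ) : ℝ :=
  if t ≤ s - 1 then
    (1 / Real.Gamma α) *
      (rf (b - s + 1 : ℝ) (α - 1) * rf (t - a : ℝ) (α - 2) / rf (b - a : ℝ) (α - 2))
  else
    (1 / Real.Gamma α) *
      (rf (b - s + 1 : ℝ) (α - 1) * rf (t - a : ℝ) (α - 2) / rf (b - a : ℝ) (α - 2) -
        rf (t - s + 1 : ℝ) (α - 1))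

theorem rf_pos_aux (x r : ℝ) (hx : 1 ≤ x) (hr : -1 < r) : 0 < rf x r := by
  have h0 : x ≠ 0 := by linarith
  simp only [rf, h0, if_false]
  exact div_pos (Real.Gamma_pos_of_pos (by linarith)) (Real.Gamma_pos_of_pos (by linarith))

theorem rf_succ_aux (x r : ℝ) (hx : 1 ≤ x) (hr : -1 < r) :
    rf (x + 1) r = rf x r * ((x + r) / x) := by
  have h0 : x ≠ 0 := by linarith
  have h1 : x + 1 ≠ 0 := by linarith
  have h2 : x + r ≠ 0 := by linarith
  have h3 : Real.Gamma x ≠ 0 := (Real.Gamma_pos_of_pos (by linarith)).ne'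
  simp only [rf, h0, h1, if_false]
  rw [show x + 1 + r = (x + r) + 1 by ring, Real.Gamma_add_one h2, Real.Gamma_add_one h0]
  field_simp

theorem rf_mono_aux (r : ℝ) (hr : 0 ≤ r) (m n : ℤ) (hm : 1 ≤ m) (hmn : m ≤ n) :
    rf (m : ℝ) r ≤ rf (n : ℝ) r := by
  induction n, hmn using Int.le_induction with
  | base => exact le_rfl
  | succ k hk ih =>
    have hk1 : (1 : ℝ) ≤ k := by exact_mod_cast hm.trans hk
    push_cast
    rw [rf_succ_aux _ _ hk1 (by linarith)]
    have : 1 ≤ ((k : ℝ) + r) / k := by rw [le_div_iff₀ (by linarith)]; linarith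
    exact ih.trans (le_mul_of_one_le_right (rf_pos_aux _ _ hk1 (by linarith)).le this)

theorem rf_anti_aux (r : ℝ) (hr : -1 < r) (hr0 : r ≤ 0) (m n : ℤ) (hm : 1 ≤ m) (hmn : m ≤ n) :
    rf (n : ℝ) r ≤ rf (m : ℝ) r := by
  induction n, hmn using Int.le_induction with
  | base => exact le_rfl
  | succ k hk ih =>
    have hk1 : (1 : ℝ) ≤ k := by exact_mod_cast hm.trans hk
    push_cast
    rw [rf_succ_aux _ _ hk1 hr]
    have : ((k : ℝ) + r) / k ≤ 1 := by rw [div_le_iff₀ (by linarith)]; linarith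
    exact (mul_le_of_le_one_right (rf_pos_aux _ _ hk1 hr).le this).trans ih

theorem Gl_bound_aux (a b : ℤ) (hab : 2 ≤ b - a) (α : ℝ) (hα1 : 1 < α) (hα2 : α < 2)
    (t s : ℤ) (ht : a + 1 ≤ t) (htb : t ≤ b) (hs : a + 2 ≤ s) (hsb : s ≤ b) :
    |Gl a b α t s| ≤ (b - a - 1 : ℝ) / (α - 1) := by
  have hn : (2 : ℝ) ≤ b - a := by exact_mod_cast hab
  have hΓ : 0 < Real.Gamma α := Real.Gamma_pos_of_pos (by linarith)
  have hΓ1 : 0 < Real.Gamma (α - 1) := Real.Gamma_pos_of_pos (by linarith)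
  have hΓα : Real.Gamma α = (α - 1) * Real.Gamma (α - 1) := by
    rw [← Real.Gamma_add_one (by linarith)]; congr 1; ring
  -- one-point values
  have h1 : rf 1 (α - 2) = Real.Gamma (α - 1) := by
    simp only [rf, one_ne_zero, if_false, Real.Gamma_one, div_one]
    congr 1; ring
  have hR : rf (b - a - 1 : ℝ) (α - 1) = (b - a - 1 : ℝ) * rf (b - a : ℝ) (α - 2) := by
    have e0 : (b - a - 1 : ℝ) ≠ 0 := by linarith
    have e1 : (b - a : ℝ) ≠ 0 := by linarith
    have e2 : Real.Gamma (b - a - 1 : ℝ) ≠ 0 := (Real.Gamma_pos_of_pos (by linarith)).ne'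
    have e3 : Real.Gamma (b - a : ℝ) = (b - a - 1 : ℝ) * Real.Gamma (b - a - 1 : ℝ) := by
      rw [← Real.Gamma_add_one e0]; congr 1; ring
    simp only [rf, e0, e1, if_false]
    rw [e3, show (b - a - 1 : ℝ) + (α - 1) = b - a + (α - 2) by ring]
    field_simp
  set D := rf (b - a : ℝ) (α - 2) with hD
  have hDpos : 0 < D := rf_pos_aux _ _ (by linarith) (by linarith)
  have hD1 : D ≤ Real.Gamma (α - 1) := by
    have := rf_anti_aux (α - 2) (by linarith) (by linarith) 1 (b - a) le_rfl (by linarith)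
    push_cast at this
    rwa [h1] at this
  have hA1 : rf (b - s + 1 : ℝ) (α - 1) ≤ (b - a - 1 : ℝ) * D := by
    have := rf_mono_aux (α - 1) (by linarith) (b - s + 1) (b - a - 1) (by linarith) (by linarith)
    push_cast at this
    rwa [hR] at this
  have hA0 : 0 < rf (b - s + 1 : ℝ) (α - 1) := by
    have : (s : ℝ) ≤ b := by exact_mod_cast hsb
    exact rf_pos_aux _ _ (by linarith) (by linarith)
  have hT0 : 0 < rf (t - a : ℝ) (α - 2) := by
    have : (a + 1 : ℝ) ≤ t := by exact_mod_cast ht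
    exact rf_pos_aux _ _ (by linarith) (by linarith)
  have hT1 : rf (t - a : ℝ) (α - 2) ≤ Real.Gamma (α - 1) := by
    have := rf_anti_aux (α - 2) (by linarith) (by linarith) 1 (t - a) le_rfl (by linarith)
    push_cast at this
    rwa [h1] at this
  have hM : (b - a - 1 : ℝ) / (α - 1)
      = 1 / Real.Gamma α * ((b - a - 1 : ℝ) * Real.Gamma (α - 1)) := by
    have : α - 1 ≠ 0 := by linarith
    rw [hΓα]; field_simp
  set A := rf (b - s + 1 : ℝ) (α - 1) * rf (t - a : ℝ) (α - 2) / D with hA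
  have hAn : 0 ≤ A := by positivity
  have hAM : A ≤ (b - a - 1 : ℝ) * Real.Gamma (α - 1) := by
    rw [hA, div_le_iff₀ hDpos]
    calc _ ≤ ((b - a - 1 : ℝ) * D) * Real.Gamma (α - 1) :=
          mul_le_mul hA1 hT1 hT0.le (hA0.le.trans hA1)
      _ = _ := by ring
  have key : ∀ z : ℝ, |z| ≤ (b - a - 1 : ℝ) * Real.Gamma (α - 1) →
      |1 / Real.Gamma α * z| ≤ (b - a - 1 : ℝ) / (α - 1) := by
    intro z hz
    rw [hM, abs_mul, abs_of_pos (by positivity : 0 < 1 / Real.Gamma α)]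
    gcongr
  unfold Gl
  split_ifs with h
  · exact key _ (by rw [← hD, ← hA, abs_of_nonneg hAn]; exact hAM)
  · apply key
    rw [← hD, ← hA]
    have hts : s ≤ t := by linarith [not_le.mp h]
    have hB1 : rf (t - s + 1 : ℝ) (α - 1) ≤ (b - a - 1 : ℝ) * D := by
      have := rf_mono_aux (α - 1) (by linarith) (t - s + 1) (b - a - 1) (by linarith) (by linarith)
      push_cast at this
      rwa [hR] at this
    have hB0 : 0 < rf (t - s + 1 : ℝ) (α - 1) := by
      have : (s : ℝ) ≤ t := by exact_mod_cast hts
      exact rf_pos_aux _ _ (by linarith) (by linarith)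
    have hB2 : (b - a - 1 : ℝ) * D ≤ (b - a - 1 : ℝ) * Real.Gamma (α - 1) :=
      mul_le_mul_of_nonneg_left hD1 (by linarith)
    rw [abs_le]
    constructor <;> linarith

theorem left_focal_nonexistence (a b : ℤ) (hab : 2 ≤ b - a) (α : ℝ)
    (hα1 : 1 < α) (hα2 : α < 2) (q : ℤ → ℝ)
    (hq : ∑ s ∈ Finset.Icc (a + 2) b, |q s| < (α - 1) / (b - a - 1 : ℝ)) :
    ∀ u : ℤ → ℝ,
      (∀ t : ℤ, a + 1 ≤ t → t ≤ b →
        u t = ∑ s ∈ Finset.Icc (a + 2) b, Gl a b α t s * q s * u s) →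
      ∀ t : ℤ, a + 1 ≤ t → t ≤ b → u t = 0 := by
  intro u hu
  have hn : (2 : ℝ) ≤ b - a := by exact_mod_cast hab
  set M : ℝ := (b - a - 1 : ℝ) / (α - 1) with hMdef
  have hM : 0 < M := div_pos (by linarith) (by linarith)
  obtain ⟨t₀, ht₀, hmax⟩ := Finset.exists_max_image (Finset.Icc (a + 1) b) (fun t => |u t|)
    ⟨b, Finset.mem_Icc.mpr ⟨by linarith, le_rfl⟩⟩
  rw [Finset.mem_Icc] at ht₀
  have hle : |u t₀| ≤ M * (∑ s ∈ Finset.Icc (a + 2) b, |q s|) * |u t₀| := by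
    conv_lhs => rw [hu t₀ ht₀.1 ht₀.2]
    refine (Finset.abs_sum_le_sum_abs _ _).trans ?_
    rw [Finset.mul_sum, Finset.sum_mul]
    refine Finset.sum_le_sum fun s hs => ?_
    rw [Finset.mem_Icc] at hs
    rw [abs_mul, abs_mul]
    have h1 := Gl_bound_aux a b hab α hα1 hα2 t₀ s ht₀.1 ht₀.2 hs.1 hs.2
    have h2 : |u s| ≤ |u t₀| := hmax s (Finset.mem_Icc.mpr ⟨by linarith [hs.1], hs.2⟩)
    gcongr
  have hlt : M * (∑ s ∈ Finset.Icc (a + 2) b, |q s|) < 1 := by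
    have := mul_lt_mul_of_pos_left hq hM
    have e : M * ((α - 1) / (b - a - 1 : ℝ)) = 1 := by
      have h1 : α - 1 ≠ 0 := by linarith
      have h2 : (b - a - 1 : ℝ) ≠ 0 := by linarith
      rw [hMdef]; field_simp
    linarith
  have hz : |u t₀| ≤ 0 := by
    by_contra hc
    push Not at hc
    nlinarith
  intro t h1 h2
  have := hmax t (Finset.mem_Icc.mpr ⟨h1, h2⟩)
  exact abs_nonpos_iff.mp (this.trans hz)
end

section
/- (Eigenvalue bound, right-focal problem) Let λ ∈ ℝ and suppose u : N[a+1,b] → ℝ is not identically zero and satisfies u(t) = λ ∑_{s=a+2}^{b} G_r(t, s) u(s) for every t with a+1 ≤ t ≤ b (the Green's-function form of the eigenvalue problem ∇_a^α u(t) + λ u(t) = 0 for a+2 ≤ t ≤ b, with u(a+1) = 0 and ∇_a^{α−1} u(b) = 0). Then |λ| ≥ Γ(α)/( (b − a − 1) · rf(b−a−1, α−1) ). -/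
/-- The right-focal Green's function. -/
noncomputable def Gr (a : ℤ) (α : ℝ) (t s : ℤ) : ℝ :=
  if t ≤ s - 1 then
    (1 / Real.Gamma α) * rf (t - a - 1 : ℝ) (α - 1)
  else
    (1 / Real.Gamma α) * (rf (t - a - 1 : ℝ) (α - 1) - rf (t - s + 1 : ℝ) (α - 1))

theorem rf_nonneg_aux (n : ℕ) (r : ℝ) (hr : 0 < r) : 0 ≤ rf (n : ℝ) r := by
  unfold rf
  split_ifs with h
  · exact le_rfl
  · have hn : (0 : ℝ) < n := lt_of_le_of_ne (Nat.cast_nonneg n) (Ne.symm h)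
    exact (div_pos (Real.Gamma_pos_of_pos (by linarith)) (Real.Gamma_pos_of_pos hn)).le

theorem rf_step_aux (r : ℝ) (hr : 0 < r) (n : ℕ) : rf (n : ℝ) r ≤ rf ((n + 1 : ℕ) : ℝ) r := by
  by_cases h : (n : ℝ) = 0
  · have : rf (n : ℝ) r = 0 := by simp [rf, h]
    rw [this]
    exact rf_nonneg_aux _ r hr
  · have hn : (0 : ℝ) < n := lt_of_le_of_ne (Nat.cast_nonneg n) (Ne.symm h)
    have h1 : ((n + 1 : ℕ) : ℝ) ≠ 0 := by positivity
    unfold rf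
    rw [if_neg h, if_neg h1]
    push_cast
    have e : (n : ℝ) + 1 + r = (n + r) + 1 := by ring
    rw [e, Real.Gamma_add_one (by positivity), Real.Gamma_add_one h]
    have g1 := Real.Gamma_pos_of_pos hn
    have g2 : 0 < Real.Gamma ((n : ℝ) + r) := Real.Gamma_pos_of_pos (by positivity)
    rw [div_le_div_iff₀ g1 (by positivity)]
    nlinarith [mul_pos g1 g2, mul_pos hr (mul_pos g1 g2)]

theorem rf_mono_aux_s17 (r : ℝ) (hr : 0 < r) (x y : ℤ) (hx : 0 ≤ x) (hxy : x ≤ y) :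
    0 ≤ rf (x : ℝ) r ∧ rf (x : ℝ) r ≤ rf (y : ℝ) r := by
  lift x to ℕ using hx
  lift y to ℕ using (by omega)
  have hm : Monotone (fun n : ℕ => rf (n : ℝ) r) := monotone_nat_of_le_succ (rf_step_aux r hr)
  have := hm (show x ≤ y by omega)
  exact ⟨by simpa using rf_nonneg_aux x r hr, by simpa using this⟩

theorem Gr_abs_aux (a b : ℤ) (α : ℝ) (hα1 : 1 < α) (t s : ℤ) (ht : a + 1 ≤ t) (htb : t ≤ b)
    (hs : a + 2 ≤ s) :
    |Gr a α t s| ≤ (1 / Real.Gamma α) * rf (b - a - 1 : ℝ) (α - 1) := by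
  have hg : 0 < Real.Gamma α := Real.Gamma_pos_of_pos (by linarith)
  have h1 := rf_mono_aux_s17 (α - 1) (by linarith) (t - a - 1) (b - a - 1) (by omega) (by omega)
  push_cast at h1
  unfold Gr
  split_ifs with h
  · rw [abs_mul, abs_of_pos (by positivity), abs_of_nonneg h1.1]
    exact mul_le_mul_of_nonneg_left h1.2 (by positivity)
  · have h2 := rf_mono_aux_s17 (α - 1) (by linarith) (t - s + 1) (t - a - 1) (by omega) (by omega)
    push_cast at h2
    rw [abs_mul, abs_of_pos (by positivity), abs_of_nonneg (by linarith)]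
    exact mul_le_mul_of_nonneg_left (by linarith) (by positivity)

theorem right_focal_eigenvalue_bound (a b : ℤ) (hab : 2 ≤ b - a) (α : ℝ)
    (hα1 : 1 < α) (hα2 : α < 2) (lam : ℝ) (u : ℤ → ℝ)
    (hu : ∃ t : ℤ, a + 1 ≤ t ∧ t ≤ b ∧ u t ≠ 0)
    (heq : ∀ t : ℤ, a + 1 ≤ t → t ≤ b →
      u t = lam * ∑ s ∈ Finset.Icc (a + 2) b, Gr a α t s * u s) :
    Real.Gamma α / ((b - a - 1 : ℝ) * rf (b - a - 1 : ℝ) (α - 1)) ≤ |lam| := by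
  obtain ⟨t1, h1, h2, h3⟩ := hu
  have hg : 0 < Real.Gamma α := Real.Gamma_pos_of_pos (by linarith)
  obtain ⟨t, ht, hmax⟩ := Finset.exists_max_image (Finset.Icc (a + 1) b) (fun t => |u t|)
    ⟨t1, Finset.mem_Icc.2 ⟨h1, h2⟩⟩
  have hpos : 0 < |u t| :=
    lt_of_lt_of_le (abs_pos.2 h3) (hmax t1 (Finset.mem_Icc.2 ⟨h1, h2⟩))
  rw [Finset.mem_Icc] at ht
  have hba : (2 : ℝ) ≤ b - a := by exact_mod_cast hab
  have hK : 0 < rf (b - a - 1 : ℝ) (α - 1) := by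
    unfold rf
    rw [if_neg (by linarith)]
    exact div_pos (Real.Gamma_pos_of_pos (by linarith)) (Real.Gamma_pos_of_pos (by linarith))
  set K := rf (b - a - 1 : ℝ) (α - 1) with hKdef
  have hsum : |∑ s ∈ Finset.Icc (a + 2) b, Gr a α t s * u s|
      ≤ (b - a - 1 : ℝ) * ((1 / Real.Gamma α * K) * |u t|) := by
    refine (Finset.abs_sum_le_sum_abs _ _).trans ?_
    have hle : ∀ s ∈ Finset.Icc (a + 2) b,
        |Gr a α t s * u s| ≤ (1 / Real.Gamma α * K) * |u t| := by
      intro s hs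
      rw [Finset.mem_Icc] at hs
      rw [abs_mul]
      exact mul_le_mul (Gr_abs_aux a b α hα1 t s ht.1 ht.2 hs.1)
        (hmax s (Finset.mem_Icc.2 ⟨by omega, hs.2⟩)) (abs_nonneg _) (by positivity)
    refine (Finset.sum_le_card_nsmul _ _ _ hle).trans (le_of_eq ?_)
    rw [nsmul_eq_mul, Int.card_Icc]
    congr 1
    have : (((b + 1 - (a + 2)).toNat : ℤ) : ℝ) = ((b - a - 1 : ℤ) : ℝ) := by
      congr 1
      omega
    push_cast at this
    simpa using this
  have hmain : |u t| ≤ |lam| * ((b - a - 1 : ℝ) * ((1 / Real.Gamma α * K) * |u t|)) := by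
    conv_lhs => rw [heq t ht.1 ht.2, abs_mul]
    exact mul_le_mul_of_nonneg_left hsum (abs_nonneg _)
  have hden : 0 < (b - a - 1 : ℝ) * K := mul_pos (by linarith) hK
  rw [div_le_iff₀ hden]
  have e : |lam| * ((b - a - 1 : ℝ) * ((1 / Real.Gamma α * K) * |u t|))
      = (|lam| * ((b - a - 1 : ℝ) * K) / Real.Gamma α) * |u t| := by ring
  rw [e] at hmain
  have h4 : 1 ≤ |lam| * ((b - a - 1 : ℝ) * K) / Real.Gamma α :=
    le_of_mul_le_mul_right (by linarith) hpos
  rwa [le_div_iff₀ hg, one_mul] at h4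
end
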